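/- arXiv:2404.03670 — 7 statements merged into one kernel-verified Lean document; each statement's English description precedes it below -/
import Mathlib

section
/- Let (V, A, tail, head) be a finite directed graph, let S ⊆ V, let γ_a : ℝ → ℝ be arbitrary functions (a ∈ A), and let x, y : A → ℝ satisfy 0 ≤ y_a ≤ γ_a(x_a) ≤ x_a for every a ∈ A and out(v) ≤ in(v) for every v ∈ V \ S. Suppose u ∈ V has waste, i.e. either in(u) > out(u), or there exists an arc a with tail a = u and y_a < γ_a(x_a). Then there exist s ∈ S and a directed path from s to u that is flow-carrying for (x, y). -/
/-!
Let `W` be the set of vertices from which `u` can be reached along a flow-carrying path, and suppose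
`W` misses `S`. Every arc with `y a > 0` whose head lies in `W` has its tail in `W` as well, so
`∑_{v ∈ W} in(v) ≤ ∑_{tail a ∈ W} y a ≤ ∑_{tail a ∈ W} x a = ∑_{v ∈ W} out(v)`.
Conservation outside `S` gives the reverse inequality vertex by vertex, so equality holds throughout.
As `u ∈ W`, waste at `u` makes one of these inequalities strict, a contradiction.
-/

open Finset

/-- Total flow going out of vertex `v` (sum of `x` over arcs with tail `v`). -/
def outFlow {V A : Type} [Fintype A] [DecidableEq V] (tail : A → V) (x : A → ℝ) (v : V) : ℝ :=
  ∑ a : A, if tail a = v then x a else 0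

/-- Total flow coming into vertex `v` (sum of `y` over arcs with head `v`). -/
def inFlow {V A : Type} [Fintype A] [DecidableEq V] (head : A → V) (y : A → ℝ) (v : V) : ℝ :=
  ∑ a : A, if head a = v then y a else 0

/-- `IsDipath tail head s t P` : the list of arcs `P` is a directed path from `s` to `t`
(the empty path is allowed precisely when `s = t`). -/
def IsDipath {V A : Type} (tail head : A → V) (s t : V) : List A → Prop
  | [] => s = t
  | a :: rest => tail a = s ∧ IsDipath tail head (head a) t rest

/-- Exchange of summation: summing, over the vertices `v ∈ W`, the values of `f` on the arcs `a` with
`e a = v` counts each arc with endpoint `e a` in `W` once. It serves for both `outFlow` and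
`inFlow`. -/
lemma sum_fiber_flow {V A : Type} [Fintype A] [DecidableEq V]
    (e : A → V) (f : A → ℝ) (W : Finset V) :
    ∑ v ∈ W, (∑ a : A, if e a = v then f a else 0) = ∑ a : A, if e a ∈ W then f a else 0 := by
  rw [Finset.sum_comm]
  exact Finset.sum_congr rfl fun a _ => Finset.sum_ite_eq W (e a) fun _ => f a

/-- If `(x, y)` is a relaxed flow (waste allowed on arcs, and surplus allowed at
non-`S` vertices), then any vertex `u` with waste—either vertex waste
`in(u) > out(u)` or an out-arc `a` with `y_a < γ_a(x_a)`—is reachable from some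
source `s ∈ S` along a flow-carrying directed path. -/
theorem waste_reachable_from_source
    {V A : Type} [Fintype V] [Fintype A] [DecidableEq V]
    (tail head : A → V) (S : Set V) (γ : A → ℝ → ℝ) (x y : A → ℝ)
    (hy0 : ∀ a, 0 ≤ y a) (hyγ : ∀ a, y a ≤ γ a (x a)) (hγx : ∀ a, γ a (x a) ≤ x a)
    (hcons : ∀ v, v ∉ S → outFlow tail x v ≤ inFlow head y v)
    (u : V)
    (hwaste : outFlow tail x u < inFlow head y u ∨ ∃ a, tail a = u ∧ y a < γ a (x a)) :
    ∃ s ∈ S, ∃ P : List A, IsDipath tail head s u P ∧ ∀ a ∈ P, 0 < x a ∧ 0 < y a := by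
  classical
  by_contra hno
  let W : Finset V := Finset.univ.filter fun v =>
    ∃ P : List A, IsDipath tail head v u P ∧ ∀ a ∈ P, 0 < x a ∧ 0 < y a
  have hyx : ∀ a, y a ≤ x a := fun a => (hyγ a).trans (hγx a)
  have huW : u ∈ W := by
    simp only [W, Finset.mem_filter, Finset.mem_univ, true_and]
    exact ⟨[], rfl, by simp⟩
  have hWS : ∀ v ∈ W, v ∉ S := by
    intro v hv hvS
    simp only [W, Finset.mem_filter, Finset.mem_univ, true_and] at hv
    exact hno ⟨v, hvS, hv⟩
  have hclosed : ∀ a, 0 < y a → head a ∈ W → tail a ∈ W := by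
    intro a ha h
    simp only [W, Finset.mem_filter, Finset.mem_univ, true_and] at h ⊢
    obtain ⟨P, hP, hpos⟩ := h
    refine ⟨a :: P, ⟨rfl, hP⟩, ?_⟩
    intro b hb
    rcases List.mem_cons.mp hb with rfl | hb
    · exact ⟨ha.trans_le (hyx b), ha⟩
    · exact hpos b hb
  have hterm : ∀ a, (if head a ∈ W then y a else 0) ≤ (if tail a ∈ W then x a else 0) := by
    intro a
    have h0 := hy0 a
    have h1 := hyx a
    have h2 := hclosed a
    split_ifs with hh ht
    · exact h1
    · exact not_lt.mp fun hlt => ht (h2 hlt hh)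
    · exact h0.trans h1
    · exact le_rfl
  have hout : ∑ v ∈ W, outFlow tail x v = ∑ a : A, if tail a ∈ W then x a else 0 :=
    sum_fiber_flow tail x W
  have hin : ∑ v ∈ W, inFlow head y v = ∑ a : A, if head a ∈ W then y a else 0 :=
    sum_fiber_flow head y W
  have hle : ∑ v ∈ W, outFlow tail x v ≤ ∑ v ∈ W, inFlow head y v :=
    Finset.sum_le_sum fun v hv => hcons v (hWS v hv)
  have hge : ∑ v ∈ W, inFlow head y v ≤ ∑ v ∈ W, outFlow tail x v := by
    rw [hout, hin]
    exact Finset.sum_le_sum fun a _ => hterm a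
  rcases hwaste with hu | ⟨a, rfl, ha⟩
  · exact absurd hge (not_le.mpr
      (Finset.sum_lt_sum (fun v hv => hcons v (hWS v hv)) ⟨u, huW, hu⟩))
  · refine absurd hle (not_le.mpr ?_)
    rw [hout, hin]
    refine Finset.sum_lt_sum (fun b _ => hterm b) ⟨a, Finset.mem_univ a, ?_⟩
    rw [if_pos huW]
    have hlt : y a < x a := ha.trans_le (hγx a)
    split_ifs
    · exact hlt
    · exact (hy0 a).trans_lt hlt
end

section
/- Consider a network satisfying the regularity assumptions. If (x, y) is CP-feasible and optimal among CP-feasible pairs, i.e. Σ_{a∈A} c_a(x_a) ≤ Σ_{a∈A} c_a(x′_a) for every CP-feasible pair (x′, y′), then (x, y) is equality-feasible. -/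
/-!
Waste anywhere can be pushed upstream. If the pair is optimal and an arc discards flow
(`y a < γ a (x a)`), then `x a` can be lowered slightly, which never raises the cost; it lowers the
cost strictly if the arc leaves the source, and otherwise it creates slack at the tail
(`CPOptimal.exists_slack_tail`). If a vertex has slack, then lowering `y b` slightly on an entering
arc `b` with `y b > 0` makes that arc discard flow, so the slack moves on to its tail
(`CPOptimal.exists_slack_of_head`). All this preserves optimality and the support of `y`.

Suppose an optimal pair has slack at `v`, and let `R` be the set of vertices, `v` among them, to
which slack can be moved while keeping optimality and the support of `y`. By optimality `R` omits
the source, and every arc entering `R` with positive `y` starts in `R`. Summing over `R` and using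
`y ≤ x`, the total inflow of `R` is at most its total outflow, while inflow dominates outflow at
each vertex; hence the two agree at every vertex of `R` (`CPFeasible.out_eq_in_of_closed`), contradicting the slack
at `v`. So an optimal pair has no slack, and hence discards no flow on arcs either.
-/

open Finset

/-- Feasibility for the relaxed convex program (waste allowed). -/
def CPFeasible {V A : Type} [Fintype A] [DecidableEq V] (tail head : A → V) (sstar : V)
    (D : Set V) (u : A → ℝ) (γ : A → ℝ → ℝ) (dem : V → ℝ) (x y : A → ℝ) : Prop :=
  (∀ a, 0 ≤ y a) ∧ (∀ a, y a ≤ γ a (x a)) ∧ (∀ a, x a ≤ u a) ∧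
  (∀ v, v ≠ sstar → v ∉ D → outFlow tail x v ≤ inFlow head y v) ∧
  (∀ d ∈ D, dem d ≤ inFlow head y d)

/-- Feasibility with equality constraints (no waste). -/
def EqFeasible {V A : Type} [Fintype A] [DecidableEq V] (tail head : A → V) (sstar : V)
    (D : Set V) (u : A → ℝ) (γ : A → ℝ → ℝ) (dem : V → ℝ) (x y : A → ℝ) : Prop :=
  (∀ a, 0 ≤ y a) ∧ (∀ a, y a = γ a (x a)) ∧ (∀ a, x a ≤ u a) ∧
  (∀ v, v ≠ sstar → v ∉ D → outFlow tail x v = inFlow head y v) ∧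
  (∀ d ∈ D, inFlow head y d = dem d)

section Helpers

variable {V A : Type} [Fintype A] [DecidableEq V]
  {tail head : A → V} {sstar : V} {D : Set V} {u : A → ℝ} {γ c : A → ℝ → ℝ} {dem : V → ℝ}
  {x y : A → ℝ}

/-- A CP-feasible pair of minimum cost. -/
def CPOptimal (tail head : A → V) (sstar : V) (D : Set V) (u : A → ℝ) (γ c : A → ℝ → ℝ)
    (dem : V → ℝ) (x y : A → ℝ) : Prop :=
  CPFeasible tail head sstar D u γ dem x y ∧
    ∀ x' y' : A → ℝ, CPFeasible tail head sstar D u γ dem x' y' →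
      ∑ a : A, c a (x a) ≤ ∑ a : A, c a (x' a)

/-- `v` is not the source and its balance constraint (conservation for an inner vertex, demand for
a sink) holds with strict inequality. -/
def SlackAt (tail head : A → V) (sstar : V) (D : Set V) (dem : V → ℝ) (x y : A → ℝ) (v : V) :
    Prop :=
  v ≠ sstar ∧ (v ∉ D → outFlow tail x v < inFlow head y v) ∧ (v ∈ D → dem v < inFlow head y v)

/-! ### Inflow and outflow sums -/

lemma outFlow_mono {x x' : A → ℝ} (h : ∀ a, x' a ≤ x a) (v : V) :
    outFlow tail x' v ≤ outFlow tail x v := by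
  unfold outFlow
  gcongr with a
  split_ifs
  · exact h a
  · exact le_rfl

lemma outFlow_lt {x x' : A → ℝ} (h : ∀ a, x' a ≤ x a) {a : A} (ha : x' a < x a) :
    outFlow tail x' (tail a) < outFlow tail x (tail a) := by
  unfold outFlow
  apply Finset.sum_lt_sum
  · intro b _
    split_ifs
    · exact h b
    · exact le_rfl
  · exact ⟨a, Finset.mem_univ a, by simpa using ha⟩

lemma outFlow_eq_zero_of_sink (hnoout : ∀ a, tail a ∉ D) (x : A → ℝ) {v : V} (hv : v ∈ D) :
    outFlow tail x v = 0 := by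
  unfold outFlow
  apply Finset.sum_eq_zero
  intro a _
  rw [if_neg]
  rintro rfl
  exact hnoout a hv

lemma inFlow_nonneg (hy : ∀ a, 0 ≤ y a) (v : V) : 0 ≤ inFlow head y v := by
  unfold inFlow
  apply Finset.sum_nonneg
  intro a _
  split_ifs
  · exact hy a
  · exact le_rfl

lemma inFlow_update [DecidableEq A] (y : A → ℝ) (b : A) (ε : ℝ) (v : V) :
    inFlow head (Function.update y b (y b - ε)) v
      = inFlow head y v - if head b = v then ε else 0 := by
  have h : ∀ a, (if head a = v then Function.update y b (y b - ε) a else 0)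
      = (if head a = v then y a else 0) - if a = b then (if head b = v then ε else 0) else 0 := by
    intro a
    by_cases hab : a = b
    · subst hab
      by_cases hv : head a = v <;> simp [hv]
    · simp [hab]
  unfold inFlow
  rw [Finset.sum_congr rfl fun a _ => h a, Finset.sum_sub_distrib]
  simp

lemma CPFeasible.x_nonneg (hγmono : ∀ a, StrictMono (γ a)) (hγ0 : ∀ a, γ a 0 = 0)
    (h : CPFeasible tail head sstar D u γ dem x y) (a : A) : 0 ≤ x a := by
  have h1 : γ a 0 ≤ γ a (x a) := by
    rw [hγ0]
    exact (h.1 a).trans (h.2.1 a)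
  exact (hγmono a).le_iff_le.mp h1

/-- If no flow enters a source-free set `R` from outside, then conservation is tight on `R`: the
total inflow of `R` is carried by arcs starting in `R`, and arcs do not amplify flow. -/
lemma CPFeasible.out_eq_in_of_closed [Fintype V]
    (hγmono : ∀ a, StrictMono (γ a)) (hγ0 : ∀ a, γ a 0 = 0)
    (hγle : ∀ a, ∀ ξ : ℝ, 0 ≤ ξ → γ a ξ ≤ ξ) (hnoout : ∀ a, tail a ∉ D)
    (h : CPFeasible tail head sstar D u γ dem x y) (R : Finset V) (hs : sstar ∉ R)
    (hR : ∀ b, head b ∈ R → 0 < y b → tail b ∈ R) :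
    ∀ v ∈ R, outFlow tail x v = inFlow head y v := by
  have hle : ∀ v ∈ R, outFlow tail x v ≤ inFlow head y v := by
    intro v hv
    by_cases hvD : v ∈ D
    · rw [outFlow_eq_zero_of_sink hnoout x hvD]
      exact inFlow_nonneg h.1 v
    · exact h.2.2.2.1 v (fun e => hs (e ▸ hv)) hvD
  have hsum : ∑ v ∈ R, inFlow head y v ≤ ∑ v ∈ R, outFlow tail x v := by
    unfold inFlow outFlow
    rw [Finset.sum_comm, Finset.sum_comm (s := R)]
    apply Finset.sum_le_sum
    intro a _
    rw [Finset.sum_ite_eq, Finset.sum_ite_eq]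
    have hx := CPFeasible.x_nonneg hγmono hγ0 h a
    have hyx : y a ≤ x a := (h.2.1 a).trans (hγle a _ hx)
    have hy := h.1 a
    split_ifs with h1 h2 h2
    · exact hyx
    · by_contra hcon
      exact h2 (hR a h1 (not_le.mp hcon))
    · exact hx
    · exact le_rfl
  exact (Finset.sum_eq_sum_iff_of_le hle).mp (le_antisymm (Finset.sum_le_sum hle) hsum)

/-! ### Moving slack upstream -/

/-- An optimal pair discarding flow on `a` can be changed, keeping `y`, into an optimal pair with
slack at the tail of `a`; in particular `a` does not leave the source. -/
lemma CPOptimal.exists_slack_tail (hγcont : ∀ a, Continuous (γ a))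
    (hcmono : ∀ a, Monotone (c a)) (hcsrc : ∀ a, tail a = sstar → StrictMono (c a))
    (hnoout : ∀ a, tail a ∉ D)
    (h : CPOptimal tail head sstar D u γ c dem x y) {a : A} (ha : y a < γ a (x a)) :
    ∃ x', CPOptimal tail head sstar D u γ c dem x' y ∧
      SlackAt tail head sstar D dem x' y (tail a) := by
  classical
  obtain ⟨⟨hy0, hyγ, hxu, hcons, hdemand⟩, hopt⟩ := h
  obtain ⟨t, hγt, htx⟩ : ∃ t, y a < γ a t ∧ t < x a := by
    have hev := ((hγcont a).continuousAt (x := x a)).eventually_const_lt ha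
    exact ((hev.filter_mono nhdsWithin_le_nhds).and
      (self_mem_nhdsWithin : Set.Iio (x a) ∈ nhdsWithin (x a) (Set.Iio (x a)))).exists
  set x' := Function.update x a t with hx'
  have hx'a : x' a = t := by simp [hx']
  have hne : ∀ b, b ≠ a → x' b = x b := fun b hb => by simp [hx', hb]
  have hx'le : ∀ b, x' b ≤ x b := by
    intro b
    by_cases hb : b = a
    · subst hb
      rw [hx'a]
      exact htx.le
    · exact (hne b hb).le
  have hfeas : CPFeasible tail head sstar D u γ dem x' y := by
    refine ⟨hy0, fun b => ?_, fun b => (hx'le b).trans (hxu b),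
      fun v hv hvD => (outFlow_mono hx'le v).trans (hcons v hv hvD), hdemand⟩
    by_cases hb : b = a
    · subst hb
      rw [hx'a]
      exact hγt.le
    · rw [hne b hb]
      exact hyγ b
  have hcost : ∀ b ∈ Finset.univ, c b (x' b) ≤ c b (x b) := fun b _ => hcmono b (hx'le b)
  have hsrc : tail a ≠ sstar := by
    intro e
    have hlt : ∑ b, c b (x' b) < ∑ b, c b (x b) :=
      Finset.sum_lt_sum hcost ⟨a, Finset.mem_univ a, hcsrc a e (hx'a ▸ htx)⟩
    exact absurd (hopt x' y hfeas) (not_le.mpr hlt)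
  refine ⟨x', ⟨hfeas, fun x₂ y₂ h₂ => (Finset.sum_le_sum hcost).trans (hopt x₂ y₂ h₂)⟩,
    hsrc, fun hinner => ?_, fun hsink => absurd hsink (hnoout a)⟩
  exact (outFlow_lt hx'le (hx'a ▸ htx)).trans_le (hcons _ hsrc hinner)

/-- Slack at the head of an arc carrying flow can be moved to its tail, preserving optimality and
the support of `y`. -/
lemma CPOptimal.exists_slack_of_head (hγcont : ∀ a, Continuous (γ a))
    (hcmono : ∀ a, Monotone (c a)) (hcsrc : ∀ a, tail a = sstar → StrictMono (c a))
    (hnoout : ∀ a, tail a ∉ D)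
    (h : CPOptimal tail head sstar D u γ c dem x y) {b : A} (hb : 0 < y b)
    (hs : SlackAt tail head sstar D dem x y (head b)) :
    ∃ x' y', CPOptimal tail head sstar D u γ c dem x' y' ∧ (∀ a, 0 < y' a ↔ 0 < y a) ∧
      SlackAt tail head sstar D dem x' y' (tail b) := by
  classical
  obtain ⟨⟨hy0, hyγ, hxu, hcons, hdemand⟩, hopt⟩ := h
  obtain ⟨hsne, hsout, hsdem⟩ := hs
  obtain ⟨ε, hε, hεy, hεout, hεdem⟩ : ∃ ε : ℝ, 0 < ε ∧ ε < y b ∧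
      (head b ∉ D → outFlow tail x (head b) + ε ≤ inFlow head y (head b)) ∧
      (head b ∈ D → dem (head b) + ε ≤ inFlow head y (head b)) := by
    by_cases hD' : head b ∈ D
    · have h1 := hsdem hD'
      refine ⟨min (y b / 2) (inFlow head y (head b) - dem (head b)), lt_min (by linarith)
        (by linarith), (min_le_left _ _).trans_lt (by linarith), fun h => absurd hD' h, fun _ => ?_⟩
      linarith [min_le_right (y b / 2) (inFlow head y (head b) - dem (head b))]
    · have h1 := hsout hD'
      refine ⟨min (y b / 2) (inFlow head y (head b) - outFlow tail x (head b)),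
        lt_min (by linarith) (by linarith), (min_le_left _ _).trans_lt (by linarith),
        fun _ => ?_, fun h => absurd h hD'⟩
      linarith [min_le_right (y b / 2) (inFlow head y (head b) - outFlow tail x (head b))]
  set y' := Function.update y b (y b - ε) with hy'
  have hy'b : y' b = y b - ε := by simp [hy']
  have hne : ∀ a, a ≠ b → y' a = y a := fun a ha => by simp [hy', ha]
  have hin : ∀ v, inFlow head y' v = inFlow head y v - if head b = v then ε else 0 :=
    inFlow_update y b ε
  have hsupp : ∀ a, 0 < y' a ↔ 0 < y a := by
    intro a
    by_cases ha : a = b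
    · subst ha
      rw [hy'b]
      exact ⟨fun _ => hb, fun _ => by linarith⟩
    · rw [hne a ha]
  have hy'le : ∀ a, y' a ≤ y a := by
    intro a
    by_cases ha : a = b
    · subst ha
      linarith
    · exact (hne a ha).le
  have hfeas : CPFeasible tail head sstar D u γ dem x y' := by
    refine ⟨fun a => ?_, fun a => (hy'le a).trans (hyγ a), hxu, fun v hv hvD => ?_, fun d hd => ?_⟩
    · by_cases ha : a = b
      · subst ha
        linarith
      · exact hne a ha ▸ hy0 a
    · rw [hin]
      split_ifs with e
      · subst e
        linarith [hεout hvD]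
      · linarith [hcons v hv hvD]
    · rw [hin]
      split_ifs with e
      · subst e
        linarith [hεdem hd]
      · linarith [hdemand d hd]
  have hopt' : CPOptimal tail head sstar D u γ c dem x y' := ⟨hfeas, hopt⟩
  have hwaste : y' b < γ b (x b) := by linarith [hyγ b]
  obtain ⟨x', hx', hslack⟩ :=
    CPOptimal.exists_slack_tail hγcont hcmono hcsrc hnoout hopt' hwaste
  exact ⟨x', y', hx', hsupp, hslack⟩

/-- No optimal pair has slack at any vertex. -/
lemma CPOptimal.not_slackAt [Fintype V]
    (hγcont : ∀ a, Continuous (γ a)) (hγmono : ∀ a, StrictMono (γ a))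
    (hγ0 : ∀ a, γ a 0 = 0) (hγle : ∀ a, ∀ ξ : ℝ, 0 ≤ ξ → γ a ξ ≤ ξ)
    (hcmono : ∀ a, Monotone (c a)) (hcsrc : ∀ a, tail a = sstar → StrictMono (c a))
    (hnoout : ∀ a, tail a ∉ D) (hdem : ∀ d ∈ D, 0 ≤ dem d)
    (h : CPOptimal tail head sstar D u γ c dem x y) (v : V) :
    ¬ SlackAt tail head sstar D dem x y v := by
  classical
  intro hv
  -- `R` is the set of vertices to which slack can be moved without changing the support of `y`.
  let R : Finset V := Finset.univ.filter fun w => ∃ x' y',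
    CPOptimal tail head sstar D u γ c dem x' y' ∧ (∀ a, 0 < y' a ↔ 0 < y a) ∧
      SlackAt tail head sstar D dem x' y' w
  have hvR : v ∈ R := by
    simp only [R, Finset.mem_filter, Finset.mem_univ, true_and]
    exact ⟨x, y, h, fun _ => Iff.rfl, hv⟩
  have hsR : sstar ∉ R := by
    simp only [R, Finset.mem_filter, Finset.mem_univ, true_and]
    rintro ⟨x', y', -, -, hs⟩
    exact hs.1 rfl
  have hclosed : ∀ b, head b ∈ R → 0 < y b → tail b ∈ R := by
    simp only [R, Finset.mem_filter, Finset.mem_univ, true_and]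
    rintro b ⟨x₁, y₁, h₁, hsupp₁, hs₁⟩ hb
    obtain ⟨x₂, y₂, h₂, hsupp₂, hs₂⟩ := CPOptimal.exists_slack_of_head hγcont hcmono hcsrc hnoout
      h₁ ((hsupp₁ b).mpr hb) hs₁
    exact ⟨x₂, y₂, h₂, fun a => (hsupp₂ a).trans (hsupp₁ a), hs₂⟩
  have heq := CPFeasible.out_eq_in_of_closed hγmono hγ0 hγle hnoout h.1 R hsR hclosed v hvR
  by_cases hvD : v ∈ D
  · have h0 := outFlow_eq_zero_of_sink hnoout x hvD
    linarith [hv.2.2 hvD, hdem v hvD]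
  · linarith [hv.2.1 hvD]

end Helpers

/-- Any optimal CP-feasible pair is equality-feasible. -/
theorem optimal_CPFeasible_is_EqFeasible
    {V A : Type} [Fintype V] [Fintype A] [Nonempty A] [DecidableEq V]
    (tail head : A → V) (sstar : V) (D : Set V) (hD : sstar ∉ D)
    (u : A → ℝ) (hu : ∀ a, 0 ≤ u a)
    (γ c : A → ℝ → ℝ)
    (hγcont : ∀ a, Continuous (γ a)) (hγmono : ∀ a, StrictMono (γ a))
    (hγ0 : ∀ a, γ a 0 = 0) (hγle : ∀ a, ∀ ξ : ℝ, 0 ≤ ξ → γ a ξ ≤ ξ)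
    (hcmono : ∀ a, Monotone (c a)) (hc0 : ∀ a, c a 0 = 0)
    (hcsrc : ∀ a, tail a = sstar → StrictMono (c a))
    (hnoin : ∀ a, head a ≠ sstar) (hnoout : ∀ a, tail a ∉ D)
    (dem : V → ℝ) (hdem : ∀ d ∈ D, 0 ≤ dem d)
    (x y : A → ℝ)
    (hfeas : CPFeasible tail head sstar D u γ dem x y)
    (hopt : ∀ x' y' : A → ℝ, CPFeasible tail head sstar D u γ dem x' y' →
      ∑ a : A, c a (x a) ≤ ∑ a : A, c a (x' a)) :
    EqFeasible tail head sstar D u γ dem x y := by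
  have hO : CPOptimal tail head sstar D u γ c dem x y := ⟨hfeas, hopt⟩
  have hno : ∀ x', CPOptimal tail head sstar D u γ c dem x' y →
      ∀ v, ¬ SlackAt tail head sstar D dem x' y v := fun x' h' =>
    CPOptimal.not_slackAt hγcont hγmono hγ0 hγle hcmono hcsrc hnoout hdem h'
  obtain ⟨hy0, hyγ, hxu, hcons, hdemand⟩ := hfeas
  refine ⟨hy0, fun a => ?_, hxu, fun v hv hvD => ?_, fun d hd => ?_⟩
  · by_contra hne
    obtain ⟨x', hx', hs⟩ := CPOptimal.exists_slack_tail hγcont hcmono hcsrc hnoout hO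
      (lt_of_le_of_ne (hyγ a) hne)
    exact hno x' hx' _ hs
  · by_contra hne
    exact hno x hO v ⟨hv, fun _ => lt_of_le_of_ne (hcons v hv hvD) hne, fun h => absurd h hvD⟩
  · by_contra hne
    exact hno x hO d ⟨fun e => hD (e ▸ hd), fun h => absurd hd h,
      fun _ => lt_of_le_of_ne (hdemand d hd) (Ne.symm hne)⟩
end

section
/- Let a finite directed graph (V, A, tail, head) with capacities u : A → ℝ≥0 be given, in which each γ_a : ℝ → ℝ is concave and continuous. Let S, D ⊆ V, let T > 0, let 0 = t₀ < t₁ < ⋯ < t_k = T, and set I_i := [t_{i−1}, t_i) for i < k and I_k := [t_{k−1}, T]. Let dem_d : [0, T] → ℝ be constant on each I_i (d ∈ D) and let B : S → ℝ. Suppose x, y : A → [0, T] → ℝ are such that each x_a, y_a is integrable on [0, T] and for every t ∈ [0, T]: 0 ≤ y_a(t), y_a(t) ≤ γ_a(x_a(t)), and 0 ≤ x_a(t) ≤ u_a for all a ∈ A; out(v)(t) ≤ in(v)(t) for all v ∈ V \ (S ∪ D); in(d)(t) ≥ dem_d(t) for all d ∈ D; and ∫₀ᵀ (out(s)(t) −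 in(s)(t)) dt ≤ B_s for all s ∈ S. Define x̃_a(t) := (1/(t_i − t_{i−1})) ∫_{I_i} x_a(τ) dτ for t ∈ I_i, and ỹ_a analogously. Then (x̃, ỹ) satisfies all of the same constraints for every t ∈ [0, T], and ∫_{I_i} x̃_a(τ) dτ = ∫_{I_i} x_a(τ) dτ and ∫_{I_i} ỹ_a(τ) dτ = ∫_{I_i} y_a(τ) dτ for every a ∈ A and every i. In particular, for any functions C_s : ℝ → ℝ (s ∈ S), the objective Σ_{s∈S} C_s(∫₀ᵀ out(s)(t) dt) takes the same value at (x̃, ỹ) as at (x, y); hence any piecewise averaging of a feasible dynamic flow is feasible with equal objective value. -/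
/-!
At each fixed time the pair `(x τ, y τ)`, seen as a point of `(A → ℝ) × (A → ℝ)`, is required to lie
in an intersection of closed convex sets: half-spaces (nonnegativity, capacity, conservation,
demand) and the hypographs of the concave continuous functions `γ a`. On one piece of the partition
these sets do not depend on time, since the demand is constant there. The mean of an integrable
function with values in a closed convex set stays in that set (`mean_mem_of_convex`; for a hypograph
this is Jensen's inequality), so every pointwise constraint passes to the averaged flow.

The averaged flow is constant on each piece, hence integrable, with the same integral as the original
one on each piece (`integral_eq_of_eq_mean`), hence on `[0, T]`. As `outFlow` and `inFlow` are finite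
sums, they commute with the integral, which gives the budget constraint and the objective.
-/

open Finset MeasureTheory intervalIntegral

/-- Every point of `[t 0, t k]` lies in one of the pieces, the last of which is closed. -/
lemma exists_piece (k : ℕ) (hk : 0 < k) (t : ℕ → ℝ) (I : ℕ → Set ℝ)
    (hI : ∀ i < k, I i =
      if i + 1 = k then Set.Icc (t i) (t (i + 1)) else Set.Ico (t i) (t (i + 1)))
    {τ : ℝ} (h0 : t 0 ≤ τ) (h1 : τ ≤ t k) : ∃ i < k, τ ∈ I i := by
  classical
  -- The piece is the one ending at the first `t (i + 1)` beyond `τ`, or the last one if `τ = t k`.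
  have hex : ∃ i, i + 1 = k ∨ τ < t (i + 1) := ⟨k - 1, Or.inl (by omega)⟩
  have hspec := Nat.find_spec hex
  have hmin : ∀ j < Nat.find hex, ¬ (j + 1 = k ∨ τ < t (j + 1)) := fun j hj => Nat.find_min hex hj
  have hle : Nat.find hex ≤ k - 1 := Nat.find_min' hex (Or.inl (by omega))
  generalize Nat.find hex = i at hspec hmin hle
  have hik : i < k := by omega
  have hlow : t i ≤ τ := by
    rcases i with _ | j
    · exact h0
    · have := hmin j (by omega)
      push Not at this
      exact this.2
  refine ⟨i, hik, ?_⟩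
  rw [hI i hik]
  split_ifs with h
  · exact ⟨hlow, h ▸ h1⟩
  · exact ⟨hlow, hspec.resolve_left h⟩

lemma Ioo_subset_piece (k : ℕ) (t : ℕ → ℝ) (I : ℕ → Set ℝ)
    (hI : ∀ i < k, I i =
      if i + 1 = k then Set.Icc (t i) (t (i + 1)) else Set.Ico (t i) (t (i + 1)))
    (i : ℕ) (hi : i < k) : Set.Ioo (t i) (t (i + 1)) ⊆ I i := by
  rw [hI i hi]
  split_ifs
  · exact Set.Ioo_subset_Icc_self
  · exact Set.Ioo_subset_Ico_self

lemma le_of_step {k : ℕ} {t : ℕ → ℝ} (h : ∀ i < k, t i < t (i + 1)) {i j : ℕ} (hij : i ≤ j)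
    (hj : j ≤ k) : t i ≤ t j := by
  induction j, hij using Nat.le_induction with
  | base => exact le_rfl
  | succ n _ ih => exact (ih (by omega)).trans (h n (by omega)).le

/-- The vector-valued form of Jensen's inequality: the componentwise mean over an interval of a
flow `(x, y)` satisfying a closed convex constraint inside the interval satisfies it as well. -/
lemma mean_mem_of_convex {A : Type} [Fintype A] {K : Set ((A → ℝ) × (A → ℝ))}
    (hK : Convex ℝ K) (hKc : IsClosed K) {b c : ℝ} (hbc : b < c) {x y : A → ℝ → ℝ}
    (hx : ∀ a, IntervalIntegrable (x a) volume b c)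
    (hy : ∀ a, IntervalIntegrable (y a) volume b c)
    (h : ∀ τ ∈ Set.Ioo b c, ((fun a => x a τ, fun a => y a τ) : (A → ℝ) × (A → ℝ)) ∈ K) :
    ((fun a => (c - b)⁻¹ * ∫ σ in b..c, x a σ, fun a => (c - b)⁻¹ * ∫ σ in b..c, y a σ) :
      (A → ℝ) × (A → ℝ)) ∈ K := by
  have hx' : ∀ a, Integrable (x a) (volume.restrict (Set.Ioo b c)) := fun a =>
    (intervalIntegrable_iff_integrableOn_Ioo_of_le hbc.le).1 (hx a)
  have hy' : ∀ a, Integrable (y a) (volume.restrict (Set.Ioo b c)) := fun a =>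
    (intervalIntegrable_iff_integrableOn_Ioo_of_le hbc.le).1 (hy a)
  have hX : Integrable (fun τ a => x a τ) (volume.restrict (Set.Ioo b c)) := Integrable.of_eval hx'
  have hY : Integrable (fun τ a => y a τ) (volume.restrict (Set.Ioo b c)) := Integrable.of_eval hy'
  have key := hK.set_average_mem (μ := volume) (t := Set.Ioo b c)
    (f := fun τ => ((fun a => x a τ, fun a => y a τ) : (A → ℝ) × (A → ℝ))) hKc
    (by simpa using hbc) (by simp) (ae_restrict_of_forall_mem measurableSet_Ioo h) (hX.prodMk hY)
  convert key using 1
  rw [setAverage_eq, Real.volume_real_Ioo_of_le hbc.le]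
  ext a
  · rw [Prod.smul_fst, fst_integral (hX.prodMk hY), Pi.smul_apply, eval_integral hx',
      ← integral_Ioc_eq_integral_Ioo, ← integral_of_le hbc.le, smul_eq_mul]
  · rw [Prod.smul_snd, snd_integral (hX.prodMk hY), Pi.smul_apply, eval_integral hy',
      ← integral_Ioc_eq_integral_Ioo, ← integral_of_le hbc.le, smul_eq_mul]

lemma intervalIntegrable_of_eq_const {f : ℝ → ℝ} {b c m : ℝ} (hbc : b < c)
    (h : ∀ τ ∈ Set.Ioo b c, f τ = m) : IntervalIntegrable f volume b c := by
  refine (intervalIntegrable_const (c := m)).congr_uIoo fun τ hτ => ?_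
  rw [Set.uIoo_of_le hbc.le] at hτ
  exact (h τ hτ).symm

lemma integral_eq_of_eq_mean {f : ℝ → ℝ} {b c J : ℝ} (hbc : b < c)
    (h : ∀ τ ∈ Set.Ioo b c, f τ = (c - b)⁻¹ * J) : ∫ σ in b..c, f σ = J := by
  rw [integral_congr_Ioo_of_le hbc.le (g := fun _ => (c - b)⁻¹ * J) h,
    intervalIntegral.integral_const, smul_eq_mul, mul_inv_cancel_left₀ (sub_ne_zero.2 hbc.ne')]

section Flow

variable {V A : Type} [Fintype A] [DecidableEq V]

lemma inFlow_eq_outFlow (f : A → V) (y : A → ℝ) (v : V) : inFlow f y v = outFlow f y v := rfl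

lemma isLinearMap_outFlow (f : A → V) (v : V) : IsLinearMap ℝ (fun x : A → ℝ => outFlow f x v) where
  map_add x y := by
    simp only [outFlow, ← Finset.sum_add_distrib]
    exact Finset.sum_congr rfl fun a _ => by split_ifs <;> simp
  map_smul r x := by
    simp only [outFlow, Finset.smul_sum]
    exact Finset.sum_congr rfl fun a _ => by split_ifs <;> simp

lemma continuous_outFlow (f : A → V) (v : V) : Continuous (fun x : A → ℝ => outFlow f x v) :=
  (isLinearMap_outFlow f v).mk'.continuous_of_finiteDimensional

lemma intervalIntegrable_outFlow (f : A → V) (v : V) {x : A → ℝ → ℝ} {b c : ℝ}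
    (hx : ∀ a, IntervalIntegrable (x a) volume b c) :
    IntervalIntegrable (fun τ => outFlow f (fun a => x a τ) v) volume b c := by
  have := IntervalIntegrable.sum (μ := volume) (a := b) (b := c) Finset.univ
    (f := fun a τ => if f a = v then x a τ else 0) fun a _ => by
      by_cases h : f a = v
      · simpa [h] using hx a
      · simp [h]
  refine this.congr fun τ _ => ?_
  simp [outFlow]

lemma integral_outFlow (f : A → V) (v : V) {x : A → ℝ → ℝ} {b c : ℝ}
    (hx : ∀ a, IntervalIntegrable (x a) volume b c) :
    ∫ τ in b..c, outFlow f (fun a => x a τ) v = outFlow f (fun a => ∫ τ in b..c, x a τ) v := by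
  unfold outFlow
  rw [intervalIntegral.integral_finsetSum fun a _ => ?_]
  · exact Finset.sum_congr rfl fun a _ => by split_ifs <;> simp
  · by_cases h : f a = v
    · simpa [h] using hx a
    · simp [h]

end Flow

/-- Averaging a feasible dynamic generalized flow over the constancy pieces of the demand
function yields a feasible dynamic flow with the same piecewise integrals, hence the same
objective value for any production-cost functions. -/
theorem averaged_dynamic_flow_feasible
    {V A : Type} [Fintype V] [Fintype A] [DecidableEq V]
    (tail head : A → V) (u : A → ℝ) (hu : ∀ a, 0 ≤ u a)
    (γ : A → ℝ → ℝ)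
    (hγconc : ∀ a, ConcaveOn ℝ Set.univ (γ a)) (hγcont : ∀ a, Continuous (γ a))
    (S D : Set V) [DecidablePred (· ∈ S)]
    (T : ℝ) (hT : 0 < T)
    (k : ℕ) (hk : 0 < k) (t : ℕ → ℝ) (ht0 : t 0 = 0) (htk : t k = T)
    (htmono : ∀ i < k, t i < t (i + 1))
    -- the pieces `I i` (`i = 0, …, k-1`): half-open except for the last one
    (I : ℕ → Set ℝ)
    (hI : ∀ i < k, I i =
      if i + 1 = k then Set.Icc (t i) (t (i + 1)) else Set.Ico (t i) (t (i + 1)))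
    (dem : V → ℝ → ℝ)
    (hdemconst : ∀ d ∈ D, ∀ i < k, ∀ τ ∈ I i, ∀ τ' ∈ I i, dem d τ = dem d τ')
    (B : V → ℝ)
    (x y : A → ℝ → ℝ)
    -- the given dynamic flow and its feasibility
    (hxint : ∀ a, IntervalIntegrable (x a) volume 0 T)
    (hyint : ∀ a, IntervalIntegrable (y a) volume 0 T)
    (hy0 : ∀ a, ∀ τ ∈ Set.Icc (0 : ℝ) T, 0 ≤ y a τ)
    (hyγ : ∀ a, ∀ τ ∈ Set.Icc (0 : ℝ) T, y a τ ≤ γ a (x a τ))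
    (hx0 : ∀ a, ∀ τ ∈ Set.Icc (0 : ℝ) T, 0 ≤ x a τ)
    (hxu : ∀ a, ∀ τ ∈ Set.Icc (0 : ℝ) T, x a τ ≤ u a)
    (hcons : ∀ v, v ∉ S ∪ D → ∀ τ ∈ Set.Icc (0 : ℝ) T,
      outFlow tail (fun a => x a τ) v ≤ inFlow head (fun a => y a τ) v)
    (hdemand : ∀ d ∈ D, ∀ τ ∈ Set.Icc (0 : ℝ) T,
      dem d τ ≤ inFlow head (fun a => y a τ) d)
    (hbudget : ∀ s ∈ S,
      (∫ τ in (0 : ℝ)..T,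
        (outFlow tail (fun a => x a τ) s - inFlow head (fun a => y a τ) s)) ≤ B s)
    -- the averaged flow
    (xt yt : A → ℝ → ℝ)
    (hxt : ∀ a, ∀ i < k, ∀ τ ∈ I i,
      xt a τ = (t (i + 1) - t i)⁻¹ * ∫ σ in (t i)..(t (i + 1)), x a σ)
    (hyt : ∀ a, ∀ i < k, ∀ τ ∈ I i,
      yt a τ = (t (i + 1) - t i)⁻¹ * ∫ σ in (t i)..(t (i + 1)), y a σ) :
    -- the averaged flow satisfies all the same constraints …
    (∀ a, IntervalIntegrable (xt a) volume 0 T) ∧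
    (∀ a, IntervalIntegrable (yt a) volume 0 T) ∧
    (∀ a, ∀ τ ∈ Set.Icc (0 : ℝ) T, 0 ≤ yt a τ) ∧
    (∀ a, ∀ τ ∈ Set.Icc (0 : ℝ) T, yt a τ ≤ γ a (xt a τ)) ∧
    (∀ a, ∀ τ ∈ Set.Icc (0 : ℝ) T, 0 ≤ xt a τ) ∧
    (∀ a, ∀ τ ∈ Set.Icc (0 : ℝ) T, xt a τ ≤ u a) ∧
    (∀ v, v ∉ S ∪ D → ∀ τ ∈ Set.Icc (0 : ℝ) T,
      outFlow tail (fun a => xt a τ) v ≤ inFlow head (fun a => yt a τ) v) ∧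
    (∀ d ∈ D, ∀ τ ∈ Set.Icc (0 : ℝ) T,
      dem d τ ≤ inFlow head (fun a => yt a τ) d) ∧
    (∀ s ∈ S,
      (∫ τ in (0 : ℝ)..T,
        (outFlow tail (fun a => xt a τ) s - inFlow head (fun a => yt a τ) s)) ≤ B s) ∧
    -- … and has the same integral over every piece …
    (∀ a, ∀ i < k,
      (∫ σ in (t i)..(t (i + 1)), xt a σ) = ∫ σ in (t i)..(t (i + 1)), x a σ) ∧
    (∀ a, ∀ i < k,
      (∫ σ in (t i)..(t (i + 1)), yt a σ) = ∫ σ in (t i)..(t (i + 1)), y a σ) ∧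
    -- … hence the same objective value for arbitrary cost functions.
    (∀ C : V → ℝ → ℝ,
      (∑ s ∈ Finset.univ.filter (· ∈ S),
        C s (∫ τ in (0 : ℝ)..T, outFlow tail (fun a => xt a τ) s))
      = ∑ s ∈ Finset.univ.filter (· ∈ S),
        C s (∫ τ in (0 : ℝ)..T, outFlow tail (fun a => x a τ) s)) := by
  have hsub : ∀ i < k, Set.Icc (t i) (t (i + 1)) ⊆ Set.Icc 0 T := fun i hi =>
    Set.Icc_subset_Icc (ht0 ▸ le_of_step htmono (Nat.zero_le i) hi.le)
      (htk ▸ le_of_step htmono hi le_rfl)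
  have hpiece : ∀ {f : ℝ → ℝ}, IntervalIntegrable f volume 0 T →
      ∀ i < k, IntervalIntegrable f volume (t i) (t (i + 1)) := fun hf i hi =>
    hf.mono_set (by
      rw [Set.uIcc_of_le (htmono i hi).le, Set.uIcc_of_le hT.le]
      exact hsub i hi)
  have hIoo := Ioo_subset_piece k t I hI
  -- A constraint that is closed, convex and constant in time on each piece passes to the average.
  have main : ∀ K : ℝ → Set ((A → ℝ) × (A → ℝ)), (∀ τ, Convex ℝ (K τ)) → (∀ τ, IsClosed (K τ)) →
      (∀ i < k, ∀ τ ∈ I i, ∀ τ' ∈ I i, K τ = K τ') →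
      (∀ τ ∈ Set.Icc 0 T, ((fun a => x a τ, fun a => y a τ) : (A → ℝ) × (A → ℝ)) ∈ K τ) →
      ∀ τ ∈ Set.Icc 0 T, ((fun a => xt a τ, fun a => yt a τ) : (A → ℝ) × (A → ℝ)) ∈ K τ := by
    intro K hK hKc hconst hmem τ hτ
    obtain ⟨i, hi, hτi⟩ := exists_piece k hk t I hI (ht0 ▸ hτ.1) (htk ▸ hτ.2)
    have := mean_mem_of_convex (hK τ) (hKc τ) (htmono i hi) (fun a => hpiece (hxint a) i hi)
      (fun a => hpiece (hyint a) i hi) fun σ hσ => by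
        rw [hconst i hi τ hτi σ (hIoo i hi hσ)]
        exact hmem σ (hsub i hi (Set.Ioo_subset_Icc_self hσ))
    simpa only [hxt _ i hi τ hτi, hyt _ i hi τ hτi] using this
  have hxtI : ∀ a, IntervalIntegrable (xt a) volume 0 T := fun a => by
    rw [← ht0, ← htk]
    exact IntervalIntegrable.trans_iterate fun i hi =>
      intervalIntegrable_of_eq_const (htmono i hi) fun τ hτ => hxt a i hi τ (hIoo i hi hτ)
  have hytI : ∀ a, IntervalIntegrable (yt a) volume 0 T := fun a => by
    rw [← ht0, ← htk]
    exact IntervalIntegrable.trans_iterate fun i hi =>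
      intervalIntegrable_of_eq_const (htmono i hi) fun τ hτ => hyt a i hi τ (hIoo i hi hτ)
  have hxeq : ∀ a, ∀ i < k,
      (∫ σ in (t i)..(t (i + 1)), xt a σ) = ∫ σ in (t i)..(t (i + 1)), x a σ := fun a i hi =>
    integral_eq_of_eq_mean (htmono i hi) fun τ hτ => hxt a i hi τ (hIoo i hi hτ)
  have hyeq : ∀ a, ∀ i < k,
      (∫ σ in (t i)..(t (i + 1)), yt a σ) = ∫ σ in (t i)..(t (i + 1)), y a σ := fun a i hi =>
    integral_eq_of_eq_mean (htmono i hi) fun τ hτ => hyt a i hi τ (hIoo i hi hτ)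
  have htotal : ∀ {f g : ℝ → ℝ}, IntervalIntegrable f volume 0 T →
      IntervalIntegrable g volume 0 T →
      (∀ i < k, (∫ σ in (t i)..(t (i + 1)), f σ) = ∫ σ in (t i)..(t (i + 1)), g σ) →
      (∫ σ in (0 : ℝ)..T, f σ) = ∫ σ in (0 : ℝ)..T, g σ := by
    intro f g hf hg h
    rw [← ht0, ← htk, ← sum_integral_adjacent_intervals (hpiece hf),
      ← sum_integral_adjacent_intervals (hpiece hg)]
    exact Finset.sum_congr rfl fun i hi => h i (Finset.mem_range.1 hi)
  have hX : ∀ a, (∫ σ in (0 : ℝ)..T, xt a σ) = ∫ σ in (0 : ℝ)..T, x a σ := fun a =>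
    htotal (hxtI a) (hxint a) (hxeq a)
  have hY : ∀ a, (∫ σ in (0 : ℝ)..T, yt a σ) = ∫ σ in (0 : ℝ)..T, y a σ := fun a =>
    htotal (hytI a) (hyint a) (hyeq a)
  refine ⟨hxtI, hytI, fun a => ?_, fun a => ?_, fun a => ?_, fun a => ?_, fun v hv => ?_,
    fun d hd => ?_, fun s hs => ?_, hxeq, hyeq, fun C => ?_⟩
  · refine main (fun _ => {p | 0 ≤ p.2 a}) (fun _ => ?_) (fun _ => ?_)
      (fun _ _ _ _ _ _ => rfl) (hy0 a)
    · exact convex_halfSpace_ge ⟨fun _ _ => rfl, fun _ _ => rfl⟩ 0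
    · exact isClosed_le (by fun_prop) (by fun_prop)
  · refine main (fun _ => {p | p.2 a ≤ γ a (p.1 a)}) (fun _ => ?_) (fun _ => ?_)
      (fun _ _ _ _ _ _ => rfl) (hyγ a)
    · intro p hp q hq α β hα hβ hαβ
      have h := (hγconc a).2 (Set.mem_univ (p.1 a)) (Set.mem_univ (q.1 a)) hα hβ hαβ
      have h1 := mul_le_mul_of_nonneg_left (show p.2 a ≤ γ a (p.1 a) from hp) hα
      have h2 := mul_le_mul_of_nonneg_left (show q.2 a ≤ γ a (q.1 a) from hq) hβ
      exact (add_le_add h1 h2).trans h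
    · have := hγcont a
      exact isClosed_le (by fun_prop) (by fun_prop)
  · refine main (fun _ => {p | 0 ≤ p.1 a}) (fun _ => ?_) (fun _ => ?_)
      (fun _ _ _ _ _ _ => rfl) (hx0 a)
    · exact convex_halfSpace_ge ⟨fun _ _ => rfl, fun _ _ => rfl⟩ 0
    · exact isClosed_le (by fun_prop) (by fun_prop)
  · refine main (fun _ => {p | p.1 a ≤ u a}) (fun _ => ?_) (fun _ => ?_)
      (fun _ _ _ _ _ _ => rfl) (hxu a)
    · exact convex_halfSpace_le ⟨fun _ _ => rfl, fun _ _ => rfl⟩ (u a)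
    · exact isClosed_le (by fun_prop) (by fun_prop)
  · refine main (fun _ => {p | outFlow tail p.1 v ≤ inFlow head p.2 v}) (fun _ => ?_) (fun _ => ?_)
      (fun _ _ _ _ _ _ => rfl) (hcons v hv)
    · have := convex_halfSpace_le (𝕜 := ℝ) (((isLinearMap_outFlow tail v).mk'.comp
        (LinearMap.fst ℝ (A → ℝ) (A → ℝ)) - (isLinearMap_outFlow head v).mk'.comp
        (LinearMap.snd ℝ (A → ℝ) (A → ℝ))).isLinear) 0
      simpa [inFlow_eq_outFlow] using this
    · exact isClosed_le ((continuous_outFlow tail v).comp continuous_fst)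
        ((continuous_outFlow head v).comp continuous_snd)
  · refine main (fun τ => {p | dem d τ ≤ inFlow head p.2 d}) (fun τ => ?_) (fun _ => ?_)
      (fun i hi τ hτ τ' hτ' => by simp only [hdemconst d hd i hi τ hτ τ' hτ']) (hdemand d hd)
    · exact convex_halfSpace_ge (((isLinearMap_outFlow head d).mk'.comp
        (LinearMap.snd ℝ (A → ℝ) (A → ℝ))).isLinear) (dem d τ)
    · exact isClosed_le continuous_const ((continuous_outFlow head d).comp continuous_snd)
  · have h := hbudget s hs
    simp only [inFlow_eq_outFlow] at h ⊢
    rw [integral_sub (intervalIntegrable_outFlow tail s hxint)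
      (intervalIntegrable_outFlow head s hyint), integral_outFlow tail s hxint,
      integral_outFlow head s hyint] at h
    rw [integral_sub (intervalIntegrable_outFlow tail s hxtI)
      (intervalIntegrable_outFlow head s hytI), integral_outFlow tail s hxtI,
      integral_outFlow head s hytI]
    simpa only [hX, hY] using h
  · simp only [integral_outFlow tail _ hxtI, integral_outFlow tail _ hxint, hX]
end

section
/- Consider a network in which A is nonempty and γ_a(ξ) ≤ ξ for all ξ ∈ ℝ and all a ∈ A. For (x, y, s) ∈ ℝ^A × ℝ^A × ℝ say (x, y, s) is slack-feasible if: y_a − γ_a(x_a) ≤ s, x_a − u_a ≤ s, and −y_a ≤ s for all a ∈ A; out(v) − in(v) ≤ s for all v ∈ V \ ({s*} ∪ D); and dem_d − in(d) ≤ s for all d ∈ D. Then for every α ∈ ℝ the set of slack-feasible triples (x, y, s) with s ≤ α is a bounded subset of ℝ^A × ℝ^A × ℝ. -/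
/-!
The arc constraints alone confine the sublevel set to a box. Since `γ a ξ ≤ ξ`, they give
`-s ≤ y a ≤ x a + s` and `x a ≤ u a + s`; with `s ≤ α` this yields `-2α ≤ x a ≤ u a + α` and
`-α ≤ y a ≤ u a + 2α`. The slack itself is bounded below because `-s ≤ y a ≤ u a + 2s` for any
single arc `a`, which is where nonemptiness of the arc set enters.
-/

open Finset

/-- Feasibility for the Phase I (slack) program: every inequality constraint of the
convex program is relaxed by the slack variable `s`. -/
def SlackFeasible {V A : Type} [Fintype A] [DecidableEq V] (tail head : A → V) (sstar : V)
    (D : Set V) (u : A → ℝ) (γ : A → ℝ → ℝ) (dem : V → ℝ) (x y : A → ℝ) (s : ℝ) : Prop :=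
  (∀ a, y a - γ a (x a) ≤ s) ∧ (∀ a, x a - u a ≤ s) ∧ (∀ a, -y a ≤ s) ∧
  (∀ v, v ≠ sstar → v ∉ D → outFlow tail x v - inFlow head y v ≤ s) ∧
  (∀ d ∈ D, dem d - inFlow head y d ≤ s)

/-- Every sublevel set (in the slack variable) of the Phase I program is bounded. -/
theorem slack_sublevel_bounded
    {V A : Type} [Fintype V] [Fintype A] [Nonempty A] [DecidableEq V]
    (tail head : A → V) (sstar : V) (D : Set V) (hD : sstar ∉ D)
    (u : A → ℝ) (hu : ∀ a, 0 ≤ u a)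
    (γ c : A → ℝ → ℝ)
    (hγle : ∀ a, ∀ ξ : ℝ, γ a ξ ≤ ξ)
    (dem : V → ℝ) (hdem : ∀ d ∈ D, 0 ≤ dem d)
    (α : ℝ) :
    Bornology.IsBounded {p : (A → ℝ) × (A → ℝ) × ℝ |
      SlackFeasible tail head sstar D u γ dem p.1 p.2.1 p.2.2 ∧ p.2.2 ≤ α} := by
  obtain ⟨a₀⟩ := ‹Nonempty A›
  refine (Metric.isBounded_Icc
    ((fun _ => -2 * α, fun _ => -α, -u a₀ / 3) : (A → ℝ) × (A → ℝ) × ℝ)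
    (fun a => u a + α, fun a => u a + 2 * α, α)).subset ?_
  rintro ⟨x, y, s⟩ ⟨⟨hyγ, hxu, hy, -, -⟩, hs⟩
  dsimp only at hyγ hxu hy hs
  refine ⟨⟨fun a => ?_, fun a => ?_, ?_⟩, ⟨fun a => ?_, fun a => ?_, hs⟩⟩
  · dsimp only
    linarith [hyγ a, hy a, hγle a (x a)]
  · dsimp only
    linarith [hy a]
  · -- `-s ≤ u a₀ + 2 * s`
    dsimp only
    linarith [hyγ a₀, hxu a₀, hy a₀, hγle a₀ (x a₀)]
  · dsimp only
    linarith [hxu a]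
  · dsimp only
    linarith [hyγ a, hxu a, hγle a (x a)]
end

section
/- Let f₀, g₁, …, g_m : ℝⁿ → ℝ be convex functions and h : ℝⁿ → ℝ^l an affine map; write g(z) := (g₁(z), …, g_m(z)). For (ω, ρ) ∈ ℝ^m × ℝ^l define p*(ω, ρ) := inf{f₀(z) : z ∈ ℝⁿ, g(z) ≤ ω componentwise, h(z) = ρ} ∈ [−∞, +∞]. Assume strict feasibility: there exists z₀ ∈ ℝⁿ with g(z₀) < 0 componentwise and h(z₀) = 0. Let λ ∈ ℝ^m with λ ≥ 0 and ν ∈ ℝ^l maximize the Lagrangian dual function L(λ, ν) := inf_{z ∈ ℝⁿ}(f₀(z) + λᵀg(z) + νᵀh(z)) over {(λ, ν) : λ ≥ 0 componentwise}. Then for every (ω, ρ) ∈ ℝ^m × ℝ^l, p*(ω, ρ) ≥ p*(0, 0) − λᵀω − νᵀρ. -/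
/-!
The core is strong duality under Slater's condition (`exists_multipliers`): a finite lower bound
`p` of the unperturbed program is also a lower bound of the Lagrangian for suitable multipliers.
It comes from separating the open convex strict epigraph
`{(z, u, t) | g z < u, f₀ z < t}` from the affine set `{(z, 0, p) | h z = 0}`. A functional that is
bounded below on the latter vanishes on the kernel of the linear part of `h`, so its `z`-component
factors through `h` and gives the equality multipliers. Keeping `z` as a coordinate means that `h`
need not be surjective. Slater's point makes the coefficient of `t` nonzero.

By dual optimality the given `(λ, ν)` inherits the bound
`p ≤ f₀ z + λᵀ g z + νᵀ h z` for all `z`, and for `z` feasible in the perturbed program the right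
side is at most `f₀ z + λᵀ ω + νᵀ ρ`.
-/

open Finset

lemma eq_zero_of_forall_le_mul {a c : ℝ} (hc : ∀ k : ℝ, c ≤ k * a) : a = 0 := by
  by_contra ha
  have := hc ((c - 1) / a)
  rw [div_mul_cancel₀ _ ha] at this
  linarith

lemma nonneg_of_forall_sub_mul_lt {a b s : ℝ} (hc : ∀ k : ℝ, 0 ≤ k → b - k * a < s) : 0 ≤ a := by
  by_contra! ha
  have h0 := hc 0 le_rfl
  have := hc ((s - b) / (-a)) (div_nonneg (by linarith) (by linarith))
  have ha0 : a ≠ 0 := ha.ne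
  have e : (s - b) / (-a) * a = -(s - b) := by field_simp
  rw [e] at this
  linarith

/-- Strong duality under Slater's condition: a lower bound `p` of the primal program is a lower
bound of the dual function at some dual feasible point. -/
lemma exists_multipliers {n m l : ℕ}
    (f0 : (Fin n → ℝ) → ℝ) (g : (Fin n → ℝ) → Fin m → ℝ)
    (h : (Fin n → ℝ) →ᵃ[ℝ] (Fin l → ℝ))
    (hf0 : ConvexOn ℝ Set.univ f0)
    (hg : ∀ i, ConvexOn ℝ Set.univ fun z => g z i)
    (z0 : Fin n → ℝ) (hz0 : ∀ i, g z0 i < 0) (hhz0 : h z0 = 0)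
    (p : ℝ) (hp : ∀ z, (∀ i, g z i ≤ 0) → h z = 0 → p ≤ f0 z) :
    ∃ (lam : Fin m → ℝ) (nu : Fin l → ℝ), (∀ i, 0 ≤ lam i) ∧
      ∀ z, p ≤ f0 z + ∑ i, lam i * g z i + ∑ j, nu j * h z j := by
  have hlin : ∀ z, h z = h.linear (z - z0) := by
    intro z
    have := h.linearMap_vsub z z0
    simp only [vsub_eq_sub, hhz0, sub_zero] at this
    exact this.symm
  have cf : Continuous f0 := continuousOn_univ.mp (hf0.continuousOn isOpen_univ)
  have cg : ∀ i, Continuous fun z => g z i := fun i =>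
    continuousOn_univ.mp ((hg i).continuousOn isOpen_univ)
  let B : Set ((Fin n → ℝ) × (Fin m → ℝ) × ℝ) := {x | (∀ i, g x.1 i < x.2.1 i) ∧ f0 x.1 < x.2.2}
  let C : Set ((Fin n → ℝ) × (Fin m → ℝ) × ℝ) := {x | h x.1 = 0 ∧ x.2.1 = 0 ∧ x.2.2 = p}
  have hBo : IsOpen B := by
    refine IsOpen.and ?_ ?_
    · simp only [Set.ofPred_forall]
      exact isOpen_iInter_of_finite fun i =>
        isOpen_lt ((cg i).comp continuous_fst) (by fun_prop)
    · exact isOpen_lt (cf.comp continuous_fst) (by fun_prop)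
  have hBc : Convex ℝ B := by
    rintro x ⟨hx1, hx2⟩ y ⟨hy1, hy2⟩ a b ha hb hab
    have key : ∀ q r q' r' : ℝ, q < r → q' < r' → a * q + b * q' < a * r + b * r' := by
      intro q r q' r' h1 h2
      rcases ha.eq_or_lt with rfl | ha'
      · have : b = 1 := by linarith
        subst this; linarith
      · have := mul_lt_mul_of_pos_left h1 ha'
        have := mul_le_mul_of_nonneg_left h2.le hb
        linarith
    refine ⟨fun i => ?_, ?_⟩
    · exact ((hg i).2 (Set.mem_univ x.1) (Set.mem_univ y.1) ha hb hab).trans_lt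
        (key _ _ _ _ (hx1 i) (hy1 i))
    · exact (hf0.2 (Set.mem_univ x.1) (Set.mem_univ y.1) ha hb hab).trans_lt
        (key _ _ _ _ hx2 hy2)
  have hCc : Convex ℝ C := by
    rintro x ⟨hx1, hx2, hx3⟩ y ⟨hy1, hy2, hy3⟩ a b ha hb hab
    refine ⟨?_, ?_, ?_⟩
    · have := Convex.combo_affine_apply (f := h) (x := x.1) (y := y.1) hab
      simp only [Prod.fst_add, Prod.smul_fst]
      rw [this, hx1, hy1]; simp
    · simp [hx2, hy2]
    · simp only [Prod.snd_add, Prod.smul_snd, hx3, hy3, smul_eq_mul]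
      rw [← add_mul, hab, one_mul]
  have hdisj : Disjoint B C := by
    rw [Set.disjoint_left]
    rintro x ⟨hx1, hx2⟩ ⟨hy1, hy2, hy3⟩
    rw [hy3] at hx2
    have := hp x.1 (fun i => by simpa [hy2] using (hx1 i).le) hy1
    linarith
  obtain ⟨φ, s, hB, hC⟩ := geometric_hahn_banach_open hBc hBo hCc hdisj
  -- The separating functional is `(z, u, t) ↦ ζ z - αᵀ u - β t`.
  let ζ : (Fin n → ℝ) →ₗ[ℝ] ℝ := φ.toLinearMap ∘ₗ LinearMap.inl ℝ _ _
  let α : Fin m → ℝ := fun i => - φ (0, Pi.single i 1, 0)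
  let β : ℝ := - φ (0, 0, 1)
  have hφ : ∀ z u t, φ (z, u, t) = ζ z - ∑ i, α i * u i - β * t := by
    intro z u t
    have e1 : ((z, u, t) : (Fin n → ℝ) × (Fin m → ℝ) × ℝ)
        = (z, 0, 0) + ∑ i, u i • (0, Pi.single i 1, 0) + t • (0, 0, 1) := by
      ext i
      · simp [Prod.fst_sum]
      · simp [Prod.fst_sum, Prod.snd_sum, Finset.sum_apply, Pi.single_apply]
      · simp [Prod.snd_sum]
    rw [e1, map_add, map_add, map_sum]
    simp only [map_smul, smul_eq_mul]
    have e2 : φ (z, 0, 0) = ζ z := rfl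
    rw [e2]
    simp only [α, β, neg_mul, Finset.sum_neg_distrib, sub_neg_eq_add]
    simp only [mul_comm]
  have hB' : ∀ (z : Fin n → ℝ) (u : Fin m → ℝ) (t : ℝ), (∀ i, g z i < u i) → f0 z < t →
      ζ z - ∑ i, α i * u i - β * t < s :=
    fun z u t h1 h2 => hφ z u t ▸ hB (z, u, t) ⟨h1, h2⟩
  have hC' : ∀ z, h z = 0 → s ≤ ζ z - β * p := by
    intro z hz
    have := hC (z, 0, p) ⟨hz, rfl, rfl⟩
    rw [hφ] at this
    simpa using this
  have hα : ∀ i, 0 ≤ α i := by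
    intro i
    apply nonneg_of_forall_sub_mul_lt
      (b := ζ z0 - ∑ i, α i * (g z0 i + 1) - β * (f0 z0 + 1)) (s := s)
    intro k hk
    have := hB' z0 (fun j => g z0 j + 1 + (Pi.single i k : Fin m → ℝ) j) (f0 z0 + 1)
      (fun j => by
        have : (0 : ℝ) ≤ (Pi.single i k : Fin m → ℝ) j := by
          rw [Pi.single_apply]; split_ifs <;> simp [hk]
        linarith) (by linarith)
    have e : ∑ j, α j * (g z0 j + 1 + (Pi.single i k : Fin m → ℝ) j)
        = ∑ j, α j * (g z0 j + 1) + α i * k := by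
      simp [mul_add, Finset.sum_add_distrib, Pi.single_apply]
    rw [e] at this
    linarith
  have hβ0 : 0 ≤ β := by
    apply nonneg_of_forall_sub_mul_lt
      (b := ζ z0 - ∑ i, α i * (g z0 i + 1) - β * (f0 z0 + 1)) (s := s)
    intro k hk
    have := hB' z0 (fun j => g z0 j + 1) (f0 z0 + 1 + k) (fun j => by linarith) (by linarith)
    linarith
  have hβ : 0 < β := by
    refine hβ0.lt_of_ne fun hβe => ?_
    have h1 := hB' z0 (fun i => g z0 i / 2) (f0 z0 + 1)
      (fun i => by have := hz0 i; linarith) (by linarith)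
    have h2 := hC' z0 hhz0
    have h3 : ∑ i, α i * (g z0 i / 2) ≤ 0 := Finset.sum_nonpos fun i _ =>
      mul_nonpos_of_nonneg_of_nonpos (hα i) (by have := hz0 i; linarith)
    rw [← hβe] at h1 h2
    linarith
  -- Passing to the boundary of the strict epigraph.
  have hB0 : ∀ z, ζ z - ∑ i, α i * g z i - β * f0 z ≤ s := by
    intro z
    refine le_of_forall_pos_le_add fun ε hε => ?_
    have hD : 0 < ∑ i, α i + β := add_pos_of_nonneg_of_pos (Finset.sum_nonneg fun i _ => hα i) hβ
    have hδ : 0 < ε / (∑ i, α i + β) := div_pos hε hD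
    have := hB' z (fun i => g z i + ε / (∑ i, α i + β)) (f0 z + ε / (∑ i, α i + β))
      (fun i => by linarith) (by linarith)
    simp only [mul_add, Finset.sum_add_distrib, ← Finset.sum_mul] at this
    have e : (∑ i, α i + β) * (ε / (∑ i, α i + β)) = ε := mul_div_cancel₀ _ hD.ne'
    rw [add_mul] at e
    linarith
  have hker : LinearMap.ker h.linear ≤ LinearMap.ker ζ := by
    intro v hv
    rw [LinearMap.mem_ker] at hv ⊢
    apply eq_zero_of_forall_le_mul (c := s + β * p - ζ z0)
    intro k
    have := hC' (z0 + k • v) (by rw [hlin]; simp [hv])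
    rw [map_add, map_smul, smul_eq_mul] at this
    linarith
  obtain ⟨γ, hγ⟩ : ∃ γ : (Fin l → ℝ) →ₗ[ℝ] ℝ, γ ∘ₗ h.linear = ζ := by
    have : ζ ∈ LinearMap.range h.linear.dualMap := by
      rw [LinearMap.range_dualMap_eq_dualAnnihilator_ker, Submodule.mem_dualAnnihilator]
      exact fun w hw => hker hw
    exact this
  have hγz : ∀ z, ζ z - ζ z0 = ∑ j, γ (Pi.single j 1) * h z j := by
    intro z
    rw [← map_sub, ← hγ, LinearMap.comp_apply, ← hlin, LinearMap.pi_apply_eq_sum_univ γ (h z)]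
    refine Finset.sum_congr rfl fun j _ => ?_
    rw [smul_eq_mul, mul_comm]
    congr 2
    ext k
    simp [Pi.single_apply, eq_comm]
  refine ⟨fun i => α i / β, fun j => - γ (Pi.single j 1) / β, fun i => div_nonneg (hα i) hβ0,
    fun z => ?_⟩
  have h1 := hB0 z
  have h2 := hC' z0 hhz0
  have h3 := hγz z
  have e1 : ∑ i, α i / β * g z i = (∑ i, α i * g z i) / β := by
    rw [Finset.sum_div]; exact Finset.sum_congr rfl fun i _ => by ring
  have e2 : ∑ j, - γ (Pi.single j 1) / β * h z j = -(∑ j, γ (Pi.single j 1) * h z j) / β := by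
    rw [← Finset.sum_neg_distrib, Finset.sum_div]
    exact Finset.sum_congr rfl fun i _ => by ring
  rw [e1, e2, ← h3]
  have e3 : f0 z + (∑ i, α i * g z i) / β + -(ζ z - ζ z0) / β
      = (β * f0 z + ∑ i, α i * g z i - (ζ z - ζ z0)) / β := by
    field_simp
    ring
  rw [e3, le_div_iff₀ hβ]
  linarith

/-- Global sensitivity of a strictly feasible convex program: if `(λ, ν)` maximizes the
Lagrangian dual function, then the optimal value `p*(ω, ρ)` of the `(ω, ρ)`-perturbed
program satisfies `p*(ω, ρ) ≥ p*(0, 0) − λᵀω − νᵀρ` (values in the extended reals). -/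
theorem global_sensitivity
    {n m l : ℕ}
    (f0 : (Fin n → ℝ) → ℝ) (g : (Fin n → ℝ) → Fin m → ℝ)
    (h : (Fin n → ℝ) →ᵃ[ℝ] (Fin l → ℝ))
    (hf0 : ConvexOn ℝ Set.univ f0)
    (hg : ∀ i, ConvexOn ℝ Set.univ fun z => g z i)
    (hslater : ∃ z0, (∀ i, g z0 i < 0) ∧ h z0 = 0)
    (lam : Fin m → ℝ) (nu : Fin l → ℝ) (hlam : ∀ i, 0 ≤ lam i)
    (hdualopt : ∀ (lam' : Fin m → ℝ) (nu' : Fin l → ℝ), (∀ i, 0 ≤ lam' i) →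
      (⨅ z : Fin n → ℝ,
          ((f0 z + ∑ i, lam' i * g z i + ∑ j, nu' j * h z j : ℝ) : EReal))
        ≤ ⨅ z : Fin n → ℝ,
          ((f0 z + ∑ i, lam i * g z i + ∑ j, nu j * h z j : ℝ) : EReal))
    (ω : Fin m → ℝ) (ρ : Fin l → ℝ) :
    sInf {w : EReal | ∃ z : Fin n → ℝ, (∀ i, g z i ≤ 0) ∧ h z = 0 ∧ w = (f0 z : ℝ)}
        - (((∑ i, lam i * ω i) + ∑ j, nu j * ρ j : ℝ) : EReal)
      ≤ sInf {w : EReal | ∃ z : Fin n → ℝ, (∀ i, g z i ≤ ω i) ∧ h z = ρ ∧ w = (f0 z : ℝ)} := by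
  obtain ⟨z0, hz0, hhz0⟩ := hslater
  set P := sInf {w : EReal | ∃ z : Fin n → ℝ, (∀ i, g z i ≤ 0) ∧ h z = 0 ∧ w = (f0 z : ℝ)} with hP
  have hPle : ∀ z, (∀ i, g z i ≤ 0) → h z = 0 → P ≤ (f0 z : ℝ) :=
    fun z h1 h2 => sInf_le ⟨z, h1, h2, rfl⟩
  have hPtop : P ≠ ⊤ := ne_top_of_le_ne_top (EReal.coe_ne_top _)
    (hPle z0 (fun i => (hz0 i).le) hhz0)
  clear_value P
  induction P with
  | bot => simp
  | top => exact absurd rfl hPtop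
  | coe p =>
    obtain ⟨lam', nu', hlam', hbound⟩ := exists_multipliers f0 g h hf0 hg z0 hz0 hhz0 p
      fun z h1 h2 => EReal.coe_le_coe_iff.mp (hPle z h1 h2)
    have hle := (le_iInf fun z => EReal.coe_le_coe_iff.mpr (hbound z)).trans
      (hdualopt lam' nu' hlam')
    refine le_sInf ?_
    rintro w ⟨z, hgz, hhz, rfl⟩
    have hz := EReal.coe_le_coe_iff.mp (hle.trans (iInf_le _ z))
    have hsum : ∑ i, lam i * g z i ≤ ∑ i, lam i * ω i :=
      Finset.sum_le_sum fun i _ => mul_le_mul_of_nonneg_left (hgz i) (hlam i)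
    rw [hhz] at hz
    rw [← EReal.coe_sub, EReal.coe_le_coe_iff]
    linarith
end

section
/- Let f₀, g₁, …, g_m : ℝⁿ → ℝ be convex functions and h : ℝⁿ → ℝ^l an affine map; write g(z) := (g₁(z), …, g_m(z)). For (ω, ρ) ∈ ℝ^m × ℝ^l define p*(ω, ρ) := inf{f₀(z) : z ∈ ℝⁿ, g(z) ≤ ω componentwise, h(z) = ρ}. Assume strict feasibility: there exists z₀ ∈ ℝⁿ with g(z₀) < 0 componentwise and h(z₀) = 0. Let λ ∈ ℝ^m with λ ≥ 0 and ν ∈ ℝ^l maximize the Lagrangian dual function L(λ, ν) := inf_{z}(f₀(z) + λᵀg(z) + νᵀh(z)) over {(λ, ν) : λ ≥ 0}. If p* is finite on a neighborhood of (0, 0) and differentiable at (0, 0), then ∂p*/∂ω_i(0, 0) = −λ_i for every i ∈ {1, …, m} and ∂p*/∂ρ_j(0, 0) = −ν_j for every j ∈ {1, …, l}. -/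
open Finset

/-!
The derivative of the value function itself supplies a dual-feasible point attaining the primal
value, in place of a separating hyperplane. Write `D` for the derivative of `P` at `0`. Mixing an almost
optimal point of the unperturbed program with an arbitrary `z` gives
`P (t • (g z, h z)) ≤ (1 - t) * P 0 + t * f0 z` for small `t > 0`, and hence
`D (g z, h z) ≤ f0 z - P 0` (`value_subgradient`). The coordinates of `-D` therefore form a
multiplier pair whose dual value is at least `P 0`; it is dual feasible because `P` is
nonincreasing in each `ω i`. By dual optimality `(lam, nu)` also has dual value at least `P 0`,
so `P p + lam ⬝ p.1 + nu ⬝ p.2 ≥ P 0` near `0`, with equality at `0`. The derivative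
vanishes at this local minimum, which is the claim.
-/

/-- A one-sided linear upper bound along a ray bounds the directional derivative. -/
lemma deriv_le_of_ray_bound {E : Type*} [NormedAddCommGroup E] [NormedSpace ℝ E]
    {P : E → ℝ} {D : E →L[ℝ] ℝ} (hD : HasFDerivAt P D 0) (v : E) (c : ℝ)
    (hb : ∀ᶠ t : ℝ in nhdsWithin 0 (Set.Ioi 0), P (t • v) ≤ P 0 + t * c) : D v ≤ c := by
  have hline : HasDerivAt (fun t : ℝ => t • v) v 0 := by
    simpa using (hasDerivAt_id (0 : ℝ)).smul_const v
  have hD' : HasFDerivAt P D ((0 : ℝ) • v) := by simpa using hD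
  have hder : HasDerivAt (fun t : ℝ => P (t • v)) (D v) 0 := hD'.comp_hasDerivAt 0 hline
  refine le_of_tendsto hder.tendsto_slope_zero_right ?_
  filter_upwards [hb, self_mem_nhdsWithin] with t ht htpos
  have htpos : 0 < t := htpos
  simp only [zero_add, zero_smul, smul_eq_mul]
  rw [inv_mul_le_iff₀ htpos]
  linarith

/-- Small positive multiples of `v` inherit whatever holds near `0`. -/
lemma eventually_ray {E : Type*} [NormedAddCommGroup E] [NormedSpace ℝ E] {Q : E → Prop}
    (hQ : ∀ᶠ p in nhds 0, Q p) (v : E) :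
    ∀ᶠ t : ℝ in nhdsWithin 0 (Set.Ioi 0), Q (t • v) := by
  have hc : Filter.Tendsto (fun t : ℝ => t • v) (nhds 0) (nhds 0) := by
    have : Continuous fun t : ℝ => t • v := by fun_prop
    simpa using this.tendsto 0
  exact (hc.eventually hQ).filter_mono nhdsWithin_le_nhds

/-- The derivative of the value function at `0` is a subgradient, tested at the perturbation
`(g z, h z)` for which `z` itself is feasible. This perturbation may lie far from `0`. -/
lemma value_subgradient {n m l : ℕ}
    {f0 : (Fin n → ℝ) → ℝ} {g : (Fin n → ℝ) → Fin m → ℝ}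
    {h : (Fin n → ℝ) →ᵃ[ℝ] (Fin l → ℝ)}
    (hf0 : ConvexOn ℝ Set.univ f0)
    (hg : ∀ i, ConvexOn ℝ Set.univ fun z => g z i)
    {P : (Fin m → ℝ) × (Fin l → ℝ) → ℝ}
    (hP : ∀ᶠ p in nhds 0,
      IsGLB {w : ℝ | ∃ z : Fin n → ℝ, (∀ i, g z i ≤ p.1 i) ∧ h z = p.2 ∧ w = f0 z} (P p))
    {D : (Fin m → ℝ) × (Fin l → ℝ) →L[ℝ] ℝ} (hD : HasFDerivAt P D 0) (z : Fin n → ℝ) :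
    D (g z, h z) ≤ f0 z - P 0 := by
  refine deriv_le_of_ray_bound hD _ _ ?_
  have hlt : ∀ᶠ t : ℝ in nhdsWithin 0 (Set.Ioi 0), t < 1 :=
    (eventually_lt_nhds one_pos).filter_mono nhdsWithin_le_nhds
  filter_upwards [eventually_ray hP (g z, h z), self_mem_nhdsWithin, hlt] with t ht htpos ht1
  have htpos : 0 < t := htpos
  have hs : 0 < 1 - t := by linarith
  -- Every feasible value of the unperturbed program is at least `(P (t • p) - t * f0 z) / (1 - t)`.
  have hlow : (P (t • (g z, h z)) - t * f0 z) / (1 - t) ≤ P 0 := by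
    refine hP.self_of_nhds.2 ?_
    rintro w ⟨z1, hz1, hz1', rfl⟩
    rw [div_le_iff₀ hs]
    have hmem : P (t • (g z, h z)) ≤ f0 ((1 - t) • z1 + t • z) := by
      refine ht.1 ⟨_, fun i => ?_, ?_, rfl⟩
      · have h1 := (hg i).2 (Set.mem_univ z1) (Set.mem_univ z) hs.le htpos.le (by ring)
        have h2 := hz1 i
        simp only [smul_eq_mul, Prod.fst_zero, Pi.zero_apply, Prod.smul_fst, Pi.smul_apply]
          at h1 h2 ⊢
        nlinarith
      · have h1 : h ((1 - t) • z1 + t • z) = (1 - t) • h z1 + t • h z :=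
          Convex.combo_affine_apply (by ring)
        rw [h1, hz1']
        simp
    have h1 := hf0.2 (Set.mem_univ z1) (Set.mem_univ z) hs.le htpos.le (by ring)
    simp only [smul_eq_mul] at h1
    linarith
  rw [div_le_iff₀ hs] at hlow
  linarith

/-- A linear functional on `ℝ^m × ℝ^l` in coordinates. -/
lemma clm_prod_pi_apply {m l : ℕ} (D : (Fin m → ℝ) × (Fin l → ℝ) →L[ℝ] ℝ)
    (x : Fin m → ℝ) (y : Fin l → ℝ) :
    D (x, y) = ∑ i, x i * D (Pi.single i 1, 0) + ∑ j, y j * D (0, Pi.single j 1) := by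
  have hsingle : ∀ (k : ℕ) (i : Fin k),
      (Pi.single i 1 : Fin k → ℝ) = fun j => if i = j then 1 else 0 := by
    intro k i
    ext j
    simp [Pi.single_apply, eq_comm]
  have hxy : ((x, y) : (Fin m → ℝ) × (Fin l → ℝ)) = (x, 0) + (0, y) := by simp
  rw [hxy, map_add]
  congr 1
  · have := LinearMap.pi_apply_eq_sum_univ
      ((D.comp (ContinuousLinearMap.inl ℝ (Fin m → ℝ) (Fin l → ℝ))).toLinearMap) x
    simpa [hsingle] using this
  · have := LinearMap.pi_apply_eq_sum_univ
      ((D.comp (ContinuousLinearMap.inr ℝ (Fin m → ℝ) (Fin l → ℝ))).toLinearMap) y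
    simpa [hsingle] using this

/-- Local sensitivity of a strictly feasible convex program: if the optimal-value
function `p*` of the perturbed programs is finite on a neighborhood of `(0, 0)` (here:
given by a real-valued function `P` that is the greatest lower bound of the perturbed
values near `(0, 0)`) and differentiable at `(0, 0)`, then its partial derivatives
there are `−λ_i` and `−ν_j`, for any dual-optimal `(λ, ν)`. -/
theorem local_sensitivity
    {n m l : ℕ}
    (f0 : (Fin n → ℝ) → ℝ) (g : (Fin n → ℝ) → Fin m → ℝ)
    (h : (Fin n → ℝ) →ᵃ[ℝ] (Fin l → ℝ))
    (hf0 : ConvexOn ℝ Set.univ f0)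
    (hg : ∀ i, ConvexOn ℝ Set.univ fun z => g z i)
    (hslater : ∃ z0, (∀ i, g z0 i < 0) ∧ h z0 = 0)
    (lam : Fin m → ℝ) (nu : Fin l → ℝ) (hlam : ∀ i, 0 ≤ lam i)
    (hdualopt : ∀ (lam' : Fin m → ℝ) (nu' : Fin l → ℝ), (∀ i, 0 ≤ lam' i) →
      (⨅ z : Fin n → ℝ,
          ((f0 z + ∑ i, lam' i * g z i + ∑ j, nu' j * h z j : ℝ) : EReal))
        ≤ ⨅ z : Fin n → ℝ,
          ((f0 z + ∑ i, lam i * g z i + ∑ j, nu j * h z j : ℝ) : EReal))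
    (P : (Fin m → ℝ) × (Fin l → ℝ) → ℝ)
    (hP : ∀ᶠ p in nhds (0, 0),
      IsGLB {w : ℝ | ∃ z : Fin n → ℝ, (∀ i, g z i ≤ p.1 i) ∧ h z = p.2 ∧ w = f0 z} (P p))
    (hdiff : DifferentiableAt ℝ P (0, 0)) :
    (∀ i : Fin m, fderiv ℝ P (0, 0) (Pi.single i 1, 0) = -lam i) ∧
    (∀ j : Fin l, fderiv ℝ P (0, 0) (0, Pi.single j 1) = -nu j) := by
  have hP : ∀ᶠ p in nhds (0 : (Fin m → ℝ) × (Fin l → ℝ)),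
      IsGLB {w : ℝ | ∃ z : Fin n → ℝ, (∀ i, g z i ≤ p.1 i) ∧ h z = p.2 ∧ w = f0 z} (P p) := hP
  have hD : HasFDerivAt P (fderiv ℝ P (0, 0)) 0 := hdiff.hasFDerivAt
  set D := fderiv ℝ P (0, 0)
  have hmono : ∀ i, D (Pi.single i 1, 0) ≤ 0 := by
    intro i
    refine deriv_le_of_ray_bound hD _ _ ?_
    filter_upwards [eventually_ray hP (Pi.single i 1, 0), self_mem_nhdsWithin] with t ht htpos
    have htpos : 0 < t := htpos
    rw [mul_zero, add_zero]
    refine hP.self_of_nhds.2 ?_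
    rintro w ⟨z, hz, hz', rfl⟩
    refine ht.1 ⟨z, fun k => (hz k).trans ?_, by simpa using hz', rfl⟩
    have h1 : (0 : ℝ) ≤ (Pi.single i 1 : Fin m → ℝ) k := by
      rw [Pi.single_apply]; split_ifs <;> norm_num
    simpa using mul_nonneg htpos.le h1
  have hdual := hdualopt (fun i => -D (Pi.single i 1, 0)) (fun j => -D (0, Pi.single j 1))
    (fun i => neg_nonneg.2 (hmono i))
  have hlower : ∀ z, P 0 ≤ f0 z + ∑ i, lam i * g z i + ∑ j, nu j * h z j := by
    intro z
    have h1 : ((P 0 : ℝ) : EReal) ≤ ⨅ z : Fin n → ℝ,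
        ((f0 z + ∑ i, -D (Pi.single i 1, 0) * g z i
          + ∑ j, -D (0, Pi.single j 1) * h z j : ℝ) : EReal) := by
      refine le_iInf fun z => EReal.coe_le_coe_iff.2 ?_
      have h2 := value_subgradient hf0 hg hP hD z
      rw [clm_prod_pi_apply] at h2
      simp only [neg_mul, Finset.sum_neg_distrib, mul_comm (D _)]
      linarith
    exact EReal.coe_le_coe_iff.1 ((h1.trans hdual).trans (iInf_le _ z))
  let A : (Fin m → ℝ) × (Fin l → ℝ) →L[ℝ] ℝ :=
    ∑ i, lam i • (ContinuousLinearMap.proj i).comp (ContinuousLinearMap.fst ℝ _ _)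
      + ∑ j, nu j • (ContinuousLinearMap.proj j).comp (ContinuousLinearMap.snd ℝ _ _)
  have hA : ∀ p, A p = ∑ i, lam i * p.1 i + ∑ j, nu j * p.2 j := by
    intro p
    simp [A]
  have hmin : IsLocalMin (fun p => P p + A p) 0 := by
    filter_upwards [hP] with p hp
    have h1 : P 0 - A p ≤ P p := by
      refine hp.2 ?_
      rintro w ⟨z, hz, hz', rfl⟩
      have h2 := hlower z
      have h3 : ∑ i, lam i * g z i ≤ ∑ i, lam i * p.1 i :=
        Finset.sum_le_sum fun i _ => mul_le_mul_of_nonneg_left (hz i) (hlam i)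
      rw [hz'] at h2
      rw [hA]
      linarith
    rw [map_zero]
    linarith
  have hzero : D + A = 0 := hmin.hasFDerivAt_eq_zero (hD.add A.hasFDerivAt)
  have hDA : ∀ p, D p = -A p := fun p => by
    have := DFunLike.congr_fun hzero p
    simp only [add_apply, zero_apply] at this
    linarith
  constructor
  · intro i
    rw [hDA, hA]
    simp [Pi.single_apply]
  · intro j
    rw [hDA, hA]
    simp [Pi.single_apply]
end

section
/- Consider a QCQP network in which additionally s* has no in-arcs (head a ≠ s* for all a) and sinks have no out-arcs (tail a ∉ D for all a). Then for every CP-feasible pair (x, y), Σ_{a∈A} c_a(x_a) ≥ (min_{a : tail a = s*} c¹_a)·(Σ_{d∈D} dem_d); in particular the infimum of Σ_{a∈A} c_a(x_a) over CP-feasible pairs is at least (min_{a : tail a = s*} c¹_a)·(Σ_{d∈D} dem_d). -/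
/-!
Since `y a ≤ x a - r a * (x a) ^ 2 ≤ x a` on every arc, no arc creates flow. Summing the
conservation inequalities over all intermediate vertices therefore shows that the flow leaving the
source is at least the flow entering the sinks, hence at least the total demand
(`sum_demand_le_outFlow`). Each unit leaving the source pays at least the smallest linear cost
among the out-arcs of the source, and all other cost terms are nonnegative because `0 ≤ y ≤ x`.
-/

open Finset

/-- On arcs that never create flow, the flow leaving the source covers the total demand: the
vertex sums of `outFlow` and `inFlow` are `∑ x` and `∑ y`, and `∑ y ≤ ∑ x`. -/
lemma sum_demand_le_outFlow
    {V A : Type} [Fintype V] [Fintype A] [DecidableEq V]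
    (tail head : A → V) (sstar : V) (D : Set V) [DecidablePred (· ∈ D)] (hD : sstar ∉ D)
    (dem : V → ℝ) (x y : A → ℝ)
    (hnoin : ∀ a, head a ≠ sstar) (hnoout : ∀ a, tail a ∉ D)
    (hyx : ∀ a, y a ≤ x a)
    (hcons : ∀ v, v ≠ sstar → v ∉ D → outFlow tail x v ≤ inFlow head y v)
    (hsink : ∀ d ∈ D, dem d ≤ inFlow head y d) :
    ∑ d ∈ Finset.univ.filter (· ∈ D), dem d ≤ outFlow tail x sstar := by
  have hout : ∑ v, outFlow tail x v = ∑ a, x a := by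
    unfold outFlow
    rw [Finset.sum_comm]
    simp
  have hin : ∑ v, inFlow head y v = ∑ a, y a := by
    unfold inFlow
    rw [Finset.sum_comm]
    simp
  have hle : ∑ a, y a ≤ ∑ a, x a := Finset.sum_le_sum fun a _ => hyx a
  -- The three kinds of vertices (source, sinks, intermediate) in a single inequality.
  have hvertex : ∀ v, outFlow tail x v + (if v ∈ D then dem v else 0)
      ≤ inFlow head y v + (if v = sstar then outFlow tail x sstar else 0) := by
    intro v
    by_cases hv : v = sstar
    · subst hv
      have hzero : inFlow head y v = 0 :=
        Finset.sum_eq_zero fun a _ => if_neg (hnoin a)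
      simp [hD, hzero]
    · by_cases hvD : v ∈ D
      · have hzero : outFlow tail x v = 0 :=
          Finset.sum_eq_zero fun a _ => if_neg fun h : tail a = v => hnoout a (h ▸ hvD)
        simpa [hv, hvD, hzero] using hsink v hvD
      · simpa [hv, hvD] using hcons v hv hvD
  have hsum := Finset.sum_le_sum fun v (_ : v ∈ Finset.univ) => hvertex v
  rw [Finset.sum_add_distrib, Finset.sum_add_distrib, hout, hin, ← Finset.sum_filter,
    Finset.sum_ite_eq' Finset.univ sstar, if_pos (Finset.mem_univ _)] at hsum
  linarith

/-- For the QCQP network in which the super-source has no in-arcs and sinks have no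
out-arcs, the cost of every CP-feasible pair is at least
`(min_{a : tail a = s*} c¹_a) · Σ_{d ∈ D} dem_d`; in particular this also lower bounds
the optimal value (the infimum being taken in the extended reals). -/
theorem qcqp_cost_lower_bound
    {V A : Type} [Fintype V] [Fintype A] [Nonempty A] [DecidableEq V] [DecidableEq A]
    (tail head : A → V) (sstar : V) (D : Set V) [DecidablePred (· ∈ D)] (hD : sstar ∉ D)
    (u : A → ℝ) (hu : ∀ a, 0 ≤ u a)
    (r c1 c2 : A → ℝ)
    (hr : ∀ a, 0 ≤ r a) (hru : ∀ a, 0 < 1 - 2 * r a * u a)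
    (hc1 : ∀ a, 0 ≤ c1 a) (hc2 : ∀ a, 0 ≤ c2 a)
    (dem : V → ℝ) (hdem : ∀ d ∈ D, 0 ≤ dem d)
    (hnoin : ∀ a, head a ≠ sstar) (hnoout : ∀ a, tail a ∉ D)
    (hsrc : (Finset.univ.filter (fun a : A => tail a = sstar)).Nonempty) :
    (∀ x y : A → ℝ,
      CPFeasible tail head sstar D u (fun a ξ => ξ - r a * ξ ^ 2) dem x y →
      ((Finset.univ.filter (fun a : A => tail a = sstar)).inf' hsrc c1)
          * ∑ d ∈ Finset.univ.filter (· ∈ D), dem d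
        ≤ ∑ a : A, (c1 a * x a + c2 a * (x a) ^ 2)) ∧
    ((((Finset.univ.filter (fun a : A => tail a = sstar)).inf' hsrc c1)
          * ∑ d ∈ Finset.univ.filter (· ∈ D), dem d : ℝ) : EReal)
      ≤ sInf {w : EReal | ∃ x y : A → ℝ,
          CPFeasible tail head sstar D u (fun a ξ => ξ - r a * ξ ^ 2) dem x y ∧
          w = ((∑ a : A, (c1 a * x a + c2 a * (x a) ^ 2) : ℝ) : EReal)} := by
  have hbound : ∀ x y : A → ℝ,
      CPFeasible tail head sstar D u (fun a ξ => ξ - r a * ξ ^ 2) dem x y →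
      ((Finset.univ.filter (fun a : A => tail a = sstar)).inf' hsrc c1)
          * ∑ d ∈ Finset.univ.filter (· ∈ D), dem d
        ≤ ∑ a : A, (c1 a * x a + c2 a * (x a) ^ 2) := by
    rintro x y ⟨hy, hyγ, -, hcons, hsink⟩
    have hyx : ∀ a, y a ≤ x a := fun a =>
      (hyγ a).trans (sub_le_self _ (mul_nonneg (hr a) (sq_nonneg _)))
    have hx : ∀ a, 0 ≤ x a := fun a => (hy a).trans (hyx a)
    have hflow := sum_demand_le_outFlow tail head sstar D hD dem x y hnoin hnoout hyx hcons hsink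
    have hmin : 0 ≤ (Finset.univ.filter (fun a : A => tail a = sstar)).inf' hsrc c1 :=
      Finset.le_inf' _ _ fun a _ => hc1 a
    refine (mul_le_mul_of_nonneg_left hflow hmin).trans ?_
    unfold outFlow
    rw [Finset.mul_sum]
    refine Finset.sum_le_sum fun a _ => ?_
    have hquad : 0 ≤ c2 a * (x a) ^ 2 := mul_nonneg (hc2 a) (sq_nonneg _)
    split_ifs with ha
    · have hmem : a ∈ Finset.univ.filter (fun a : A => tail a = sstar) := by simp [ha]
      have hlin := mul_le_mul_of_nonneg_right (Finset.inf'_le c1 hmem) (hx a)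
      linarith
    · have hlin := mul_nonneg (hc1 a) (hx a)
      linarith
  refine ⟨hbound, le_sInf ?_⟩
  rintro w ⟨x, y, hxy, rfl⟩
  exact EReal.coe_le_coe_iff.mpr (hbound x y hxy)
end
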